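/- arXiv:2112.02055 — 2 statements merged into one kernel-verified Lean document; each statement's English description precedes it below -/
import Mathlib

section
/- Let 0 < α ≤ H < 1, let B^α be a d-dimensional fractional Brownian motion of Hurst index α, and let γ > 0 with γ ≠ Hd. There exists a constant C > 0 (depending only on d, H, α, γ) such that for all t ∈ (0,1]: E[ (max(t^H, ‖B^α(t)‖_∞))^{−γ/H} ] ≤ C t^{−γα/H} if γ < Hd, and E[ (max(t^H, ‖B^α(t)‖_∞))^{−γ/H} ] ≤ C t^{d(H−α)−γ} if γ > Hd. -/
open MeasureTheory ENNReal Set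

noncomputable section

/-- The `H`-parabolic rectangle `[a, a+δ] × ∏_{j=1}^d [b_j, b_j + δ^H]`. -/
def parRect (d : ℕ) (H : ℝ) (a : ℝ) (b : Fin d → ℝ) (δ : ℝ) : Set (ℝ × (Fin d → ℝ)) :=
  Set.Icc a (a + δ) ×ˢ Set.univ.pi fun j => Set.Icc (b j) (b j + δ ^ H)

/-- The `H`-parabolic `β`-dimensional Hausdorff content `Ψ_H^β(F)`:
the infimum of `Σ_j δ_j^β` over all countable covers of `F` by parabolic rectangles. -/
def parContent (d : ℕ) (H β : ℝ) (F : Set (ℝ × (Fin d → ℝ))) : ℝ≥0∞ :=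
  ⨅ (r : ℕ → ℝ × (Fin d → ℝ) × ℝ) (_ : ∀ n, 0 < (r n).2.2)
    (_ : F ⊆ ⋃ n, parRect d H (r n).1 (r n).2.1 (r n).2.2),
    ∑' n, ENNReal.ofReal ((r n).2.2 ^ β)

/-- The `H`-parabolic Hausdorff dimension `dim_{Ψ,H}(F) = inf {β : Ψ_H^β(F) = 0}`. -/
def parDim (d : ℕ) (H : ℝ) (F : Set (ℝ × (Fin d → ℝ))) : ℝ :=
  sInf {β : ℝ | 0 ≤ β ∧ parContent d H β F = 0}


/-- `B` is a `d`-dimensional fractional Brownian motion of Hurst index `H` under `P`: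
it is a centered Gaussian process (every finite linear functional of the process is a
centered Gaussian random variable) whose components are independent copies of the
real-valued fractional Brownian motion, i.e. with covariance
`E[Bᵢ(s) Bₖ(t)] = δ_{ik} · ½(|s|^{2H} + |t|^{2H} − |s−t|^{2H})`. -/
structure IsFBM {Ω : Type*} [MeasurableSpace Ω] (P : Measure Ω) (d : ℕ) (H : ℝ)
    (B : ℝ → Ω → Fin d → ℝ) : Prop where
  meas : ∀ t, Measurable (B t)
  gaussian : ∀ (n : ℕ) (t : Fin n → ℝ) (θ : Fin n → Fin d → ℝ),
    ∃ v : NNReal, P.map (fun ω => ∑ j, ∑ i, θ j i * B (t j) ω i) =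
      ProbabilityTheory.gaussianReal 0 v
  cov : ∀ (s t : ℝ) (i k : Fin d), ∫ ω, B s ω i * B t ω k ∂P =
    if i = k then (|s| ^ (2*H) + |t| ^ (2*H) - |s - t| ^ (2*H)) / 2 else 0

/-!
The coordinates of `B^α(t)` are independent centred Gaussians of variance `t^{2α}`, whose density is
at most `t^{-α}/2`; hence `P(‖B^α(t)‖_∞ < r) ≤ (r / t^α)^d`. Writing
`max(a, x)^{-p} = ∫_{r > max(a, x)} p r^{-p-1} dr` and exchanging the integrals gives
`E[max(a, X)^{-p}] = ∫_a^∞ p r^{-p-1} P(X < r) dr`. With `a = t^H` and `p = γ/H`, the small ball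
estimate makes this integrable at `0` when `p < d` (the trivial bound `P ≤ 1` being used beyond
`r = t^α`), and integrable at `∞` when `p > d`.
-/

open ProbabilityTheory

section PowerIntegrals

variable {b c : ℝ}

lemma lintegral_Ioi_rpow_neg_sub_one (hb : 0 < b) (hc : 0 < c) :
    ∫⁻ r in Ioi c, ENNReal.ofReal (r ^ (-b - 1)) = ENNReal.ofReal (c ^ (-b) / b) := by
  have hexp : -b - 1 < -1 := by linarith
  rw [← ofReal_integral_eq_lintegral_ofReal (integrableOn_Ioi_rpow_of_lt hexp hc),
    integral_Ioi_rpow_of_lt hexp hc, sub_add_cancel, neg_div_neg_eq]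
  filter_upwards [ae_restrict_mem measurableSet_Ioi] with r hr
  exact Real.rpow_nonneg (hc.trans hr).le _

lemma lintegral_Ioc_rpow_sub_one (hb : 0 < b) (hc : 0 ≤ c) :
    ∫⁻ r in Ioc 0 c, ENNReal.ofReal (r ^ (b - 1)) = ENNReal.ofReal (c ^ b / b) := by
  have hexp : -1 < b - 1 := by linarith
  have hint : IntegrableOn (fun r : ℝ ↦ r ^ (b - 1)) (Ioc 0 c) :=
    (intervalIntegrable_iff_integrableOn_Ioc_of_le hc).1
      (intervalIntegral.intervalIntegrable_rpow' hexp)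
  rw [← ofReal_integral_eq_lintegral_ofReal hint, ← intervalIntegral.integral_of_le hc,
    integral_rpow (Or.inl hexp), sub_add_cancel, Real.zero_rpow hb.ne', sub_zero]
  filter_upwards [ae_restrict_mem measurableSet_Ioc] with r hr
  exact Real.rpow_nonneg hr.1.le _

end PowerIntegrals

section NegativeMoments

variable {Ω : Type*} [MeasurableSpace Ω] {μ : Measure Ω} {X : Ω → ℝ} {a s p q : ℝ}

lemma lintegral_lintegral_Ioi_eq_lintegral_mul_meas_lt [SFinite μ] (hX : AEMeasurable X μ)
    (ν : Measure ℝ) [SFinite ν] {g : ℝ → ℝ≥0∞} (hg : Measurable g) :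
    ∫⁻ ω, ∫⁻ r in Ioi (X ω), g r ∂ν ∂μ = ∫⁻ r, g r * μ {ω | X ω < r} ∂ν := by
  have hlt : NullMeasurableSet {z : Ω × ℝ | X z.1 < z.2} (μ.prod ν) :=
    nullMeasurableSet_lt hX.comp_fst measurable_snd.aemeasurable
  calc ∫⁻ ω, ∫⁻ r in Ioi (X ω), g r ∂ν ∂μ
      = ∫⁻ ω, ∫⁻ r, {z : Ω × ℝ | X z.1 < z.2}.indicator (fun z ↦ g z.2) (ω, r) ∂ν ∂μ := by
        refine lintegral_congr fun ω ↦ ?_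
        rw [← lintegral_indicator measurableSet_Ioi]
        rfl
    _ = ∫⁻ r, ∫⁻ ω, {z : Ω × ℝ | X z.1 < z.2}.indicator (fun z ↦ g z.2) (ω, r) ∂μ ∂ν :=
        lintegral_lintegral_swap ((hg.comp measurable_snd).aemeasurable.indicator₀ hlt)
    _ = ∫⁻ r, g r * μ {ω | X ω < r} ∂ν := by
        refine lintegral_congr fun r ↦ ?_
        rw [← lintegral_indicator_const₀ (nullMeasurableSet_lt hX aemeasurable_const)]
        rfl

lemma lintegral_max_rpow_neg_eq_mul_lintegral_meas_lt [SFinite μ] (hX : AEMeasurable X μ)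
    (ha : 0 < a) (hp : 0 < p) :
    ∫⁻ ω, ENNReal.ofReal (max a (X ω) ^ (-p)) ∂μ =
      ENNReal.ofReal p * ∫⁻ r in Ioi a, ENNReal.ofReal (r ^ (-p - 1)) * μ {ω | X ω < r} := by
  rw [← lintegral_lintegral_Ioi_eq_lintegral_mul_meas_lt hX _ (by fun_prop),
    ← lintegral_const_mul' _ _ ENNReal.ofReal_ne_top]
  refine lintegral_congr fun ω ↦ ?_
  rw [Measure.restrict_restrict measurableSet_Ioi, Ioi_inter_Ioi,
    lintegral_Ioi_rpow_neg_sub_one hp (lt_max_of_lt_right ha), ← ENNReal.ofReal_mul hp.le,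
    mul_div_cancel₀ _ hp.ne', max_comm]

lemma setLIntegral_rpow_mul_meas_lt_le {I : Set ℝ} (hI : MeasurableSet I) (hpos : I ⊆ Ioi 0)
    (hs : 0 < s) (hball : ∀ r, 0 < r → μ {ω | X ω < r} ≤ ENNReal.ofReal ((r / s) ^ q)) :
    ∫⁻ r in I, ENNReal.ofReal (r ^ (-p - 1)) * μ {ω | X ω < r} ≤
      ENNReal.ofReal (s ^ (-q)) * ∫⁻ r in I, ENNReal.ofReal (r ^ (q - p - 1)) := by
  rw [← lintegral_const_mul' _ _ ENNReal.ofReal_ne_top]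
  refine setLIntegral_mono' hI fun r hrI ↦ ?_
  have hr : 0 < r := hpos hrI
  calc ENNReal.ofReal (r ^ (-p - 1)) * μ {ω | X ω < r}
      ≤ ENNReal.ofReal (r ^ (-p - 1)) * ENNReal.ofReal ((r / s) ^ q) := by grw [hball r hr]
    _ = ENNReal.ofReal (s ^ (-q)) * ENNReal.ofReal (r ^ (q - p - 1)) := by
        rw [← ENNReal.ofReal_mul (by positivity), ← ENNReal.ofReal_mul (by positivity),
          Real.div_rpow hr.le hs.le, div_eq_mul_inv, ← Real.rpow_neg hs.le, ← mul_assoc,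
          ← Real.rpow_add hr, mul_comm]
        ring_nf

lemma lintegral_max_rpow_neg_le_of_lt [IsProbabilityMeasure μ] (hX : AEMeasurable X μ)
    (ha : 0 < a) (hs : 0 < s) (hp : 0 < p) (hpq : p < q)
    (hball : ∀ r, 0 < r → μ {ω | X ω < r} ≤ ENNReal.ofReal ((r / s) ^ q)) :
    ∫⁻ ω, ENNReal.ofReal (max a (X ω) ^ (-p)) ∂μ ≤ ENNReal.ofReal (q / (q - p) * s ^ (-p)) := by
  have hqp : 0 < q - p := sub_pos.2 hpq
  have hnear : ∫⁻ r in Ioc 0 s, ENNReal.ofReal (r ^ (-p - 1)) * μ {ω | X ω < r} ≤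
      ENNReal.ofReal (s ^ (-p) / (q - p)) := by
    refine (setLIntegral_rpow_mul_meas_lt_le
      measurableSet_Ioc Ioc_subset_Ioi_self hs hball).trans_eq ?_
    rw [lintegral_Ioc_rpow_sub_one hqp hs.le, ← ENNReal.ofReal_mul (by positivity),
      ← mul_div_assoc, ← Real.rpow_add hs]
    ring_nf
  have hfar : ∫⁻ r in Ioi s, ENNReal.ofReal (r ^ (-p - 1)) * μ {ω | X ω < r} ≤
      ENNReal.ofReal (s ^ (-p) / p) := by
    rw [← lintegral_Ioi_rpow_neg_sub_one hp hs]
    exact lintegral_mono fun r ↦ mul_le_of_le_one_right' prob_le_one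
  have hsplit : Ioi a ⊆ Ioc 0 s ∪ Ioi s := by
    rw [Ioc_union_Ioi_eq_Ioi hs.le]
    exact Ioi_subset_Ioi ha.le
  calc ∫⁻ ω, ENNReal.ofReal (max a (X ω) ^ (-p)) ∂μ
      = ENNReal.ofReal p * ∫⁻ r in Ioi a, ENNReal.ofReal (r ^ (-p - 1)) * μ {ω | X ω < r} :=
        lintegral_max_rpow_neg_eq_mul_lintegral_meas_lt hX ha hp
    _ ≤ ENNReal.ofReal p *
          (ENNReal.ofReal (s ^ (-p) / (q - p)) + ENNReal.ofReal (s ^ (-p) / p)) := by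
        gcongr
        exact (lintegral_mono_set hsplit).trans
          ((lintegral_union_le _ _ _).trans (add_le_add hnear hfar))
    _ = ENNReal.ofReal (q / (q - p) * s ^ (-p)) := by
        rw [← ENNReal.ofReal_add (by positivity) (by positivity), ← ENNReal.ofReal_mul hp.le]
        field_simp
        ring_nf

lemma lintegral_max_rpow_neg_le_of_gt [SFinite μ] (hX : AEMeasurable X μ)
    (ha : 0 < a) (hs : 0 < s) (hp : 0 < p) (hqp : q < p)
    (hball : ∀ r, 0 < r → μ {ω | X ω < r} ≤ ENNReal.ofReal ((r / s) ^ q)) :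
    ∫⁻ ω, ENNReal.ofReal (max a (X ω) ^ (-p)) ∂μ ≤
      ENNReal.ofReal (p / (p - q) * (s ^ (-q) * a ^ (q - p))) := by
  have hpq : 0 < p - q := sub_pos.2 hqp
  calc ∫⁻ ω, ENNReal.ofReal (max a (X ω) ^ (-p)) ∂μ
      = ENNReal.ofReal p * ∫⁻ r in Ioi a, ENNReal.ofReal (r ^ (-p - 1)) * μ {ω | X ω < r} :=
        lintegral_max_rpow_neg_eq_mul_lintegral_meas_lt hX ha hp
    _ ≤ ENNReal.ofReal p *
          (ENNReal.ofReal (s ^ (-q)) * ∫⁻ r in Ioi a, ENNReal.ofReal (r ^ (q - p - 1))) := by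
        gcongr
        exact setLIntegral_rpow_mul_meas_lt_le measurableSet_Ioi (Ioi_subset_Ioi ha.le) hs hball
    _ = ENNReal.ofReal (p / (p - q) * (s ^ (-q) * a ^ (q - p))) := by
        rw [← neg_sub p q, lintegral_Ioi_rpow_neg_sub_one hpq ha,
          ← ENNReal.ofReal_mul (by positivity), ← ENNReal.ofReal_mul hp.le]
        ring_nf

end NegativeMoments

section GaussianSmallBall

lemma gaussianPDFReal_le_inv_sqrt (m : ℝ) (v : NNReal) (x : ℝ) :
    gaussianPDFReal m v x ≤ (√(2 * Real.pi * v))⁻¹ := by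
  refine mul_le_of_le_one_right (by positivity) (Real.exp_le_one_iff.2 ?_)
  rw [neg_div, neg_nonpos]
  positivity

lemma gaussianReal_ball_le (m : ℝ) {v : NNReal} (hv : v ≠ 0) (x r : ℝ) :
    gaussianReal m v (Metric.ball x r) ≤ ENNReal.ofReal (r / √v) := by
  have hsqrt : 2 * √(v : ℝ) ≤ √(2 * Real.pi * v) := by
    refine Real.le_sqrt_of_sq_le ?_
    rw [mul_pow, Real.sq_sqrt v.coe_nonneg]
    gcongr
    linarith [Real.two_le_pi]
  have hpdf (y : ℝ) : gaussianPDF m v y ≤ ENNReal.ofReal (2 * √(v : ℝ))⁻¹ := by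
    refine ENNReal.ofReal_le_ofReal ((gaussianPDFReal_le_inv_sqrt m v y).trans ?_)
    gcongr
  rw [gaussianReal_apply m hv]
  calc ∫⁻ y in Metric.ball x r, gaussianPDF m v y
      ≤ ∫⁻ _ in Metric.ball x r, ENNReal.ofReal (2 * √(v : ℝ))⁻¹ := lintegral_mono hpdf
    _ = ENNReal.ofReal (r / √v) := by
        rw [setLIntegral_const, Real.volume_ball, ← ENNReal.ofReal_mul (by positivity)]
        field_simp

variable {Ω ι : Type*} [MeasurableSpace Ω] {μ : Measure Ω} [Fintype ι]

lemma meas_norm_pi_lt_of_iIndepFun {E : ι → Type*} [∀ i, SeminormedAddCommGroup (E i)]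
    [∀ i, MeasurableSpace (E i)] [∀ i, OpensMeasurableSpace (E i)] {X : ∀ i, Ω → E i}
    (hX : iIndepFun X μ) {r : ℝ} (hr : 0 < r) :
    μ {ω | ‖fun i ↦ X i ω‖ < r} = ∏ i, μ (X i ⁻¹' Metric.ball 0 r) := by
  rw [← hX.meas_iInter fun i ↦ ⟨_, Metric.isOpen_ball.measurableSet, rfl⟩]
  congr 1
  ext ω
  simp [pi_norm_lt_iff hr]

lemma meas_norm_lt_le_of_hasGaussianLaw {X : ι → Ω → ℝ}
    (hX : HasGaussianLaw (fun ω i ↦ X i ω) μ) (hcov : ∀ i j, i ≠ j → cov[X i, X j; μ] = 0)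
    (hvar : ∀ i, 0 < Var[X i; μ]) {r : ℝ} (hr : 0 < r) :
    μ {ω | ‖fun i ↦ X i ω‖ < r} ≤ ∏ i, ENNReal.ofReal (r / √Var[X i; μ]) := by
  rw [meas_norm_pi_lt_of_iIndepFun (hX.iIndepFun_of_covariance_eq_zero hcov) hr]
  refine Finset.prod_le_prod' fun i _ ↦ ?_
  rw [← Measure.map_apply_of_aemeasurable (hX.eval i).aemeasurable Metric.isOpen_ball.measurableSet,
    (hX.eval i).map_eq_gaussianReal]
  have hball := gaussianReal_ball_le (∫ ω, X i ω ∂μ) (Real.toNNReal_pos.2 (hvar i)).ne' 0 r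
  rwa [Real.coe_toNNReal _ (hvar i).le] at hball

end GaussianSmallBall

namespace IsFBM

variable {Ω : Type*} [MeasurableSpace Ω] {P : Measure Ω} {d : ℕ} {α : ℝ} {B : ℝ → Ω → Fin d → ℝ}

lemma hasGaussianLaw (hB : IsFBM P d α B) (t : ℝ) : HasGaussianLaw (B t) P := by
  refine ⟨isGaussian_of_map_eq_gaussianReal fun L ↦ ?_⟩
  obtain ⟨v, hv⟩ := hB.gaussian 1 (fun _ ↦ t) fun _ i ↦ L (Pi.single i 1)
  refine ⟨0, v, ?_⟩
  rw [Measure.map_map (by fun_prop) (hB.meas t), ← hv]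
  congr 1
  ext ω
  conv_lhs => rw [Function.comp_apply, pi_eq_sum_univ' (B t ω)]
  simp [mul_comm]

lemma hasGaussianLaw_eval (hB : IsFBM P d α B) (t : ℝ) (i : Fin d) :
    HasGaussianLaw (fun ω ↦ B t ω i) P :=
  HasGaussianLaw.eval (X := fun i ω ↦ B t ω i) (hB.hasGaussianLaw t) i

lemma integral_eval_eq_zero (hB : IsFBM P d α B) (t : ℝ) (i : Fin d) : ∫ ω, B t ω i ∂P = 0 := by
  obtain ⟨v, hv⟩ := hB.gaussian 1 (fun _ ↦ t) fun _ ↦ Pi.single i 1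
  have hlaw : P.map (fun ω ↦ B t ω i) = gaussianReal 0 v := by
    simpa [Pi.single_apply] using hv
  calc ∫ ω, B t ω i ∂P = ∫ x, x ∂(P.map fun ω ↦ B t ω i) :=
        (integral_map (hB.hasGaussianLaw_eval t i).aemeasurable aestronglyMeasurable_id).symm
    _ = 0 := by rw [hlaw, integral_id_gaussianReal]

lemma covariance_eval (hB : IsFBM P d α B) (s t : ℝ) (i k : Fin d) :
    cov[fun ω ↦ B s ω i, fun ω ↦ B t ω k; P] =
      if i = k then (|s| ^ (2 * α) + |t| ^ (2 * α) - |s - t| ^ (2 * α)) / 2 else 0 := by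
  have := (hB.hasGaussianLaw s).isProbabilityMeasure
  rw [covariance_eq_sub (hB.hasGaussianLaw_eval s i).memLp_two
      (hB.hasGaussianLaw_eval t k).memLp_two,
    hB.integral_eval_eq_zero, zero_mul, sub_zero]
  exact hB.cov s t i k

lemma variance_eval (hB : IsFBM P d α B) (hα : 0 < α) (t : ℝ) (i : Fin d) :
    Var[fun ω ↦ B t ω i; P] = (|t| ^ α) ^ 2 := by
  rw [← covariance_self (hB.hasGaussianLaw_eval t i).aemeasurable, hB.covariance_eval, if_pos rfl,
    sub_self, abs_zero, Real.zero_rpow (by positivity), sub_zero, add_self_div_two, mul_comm,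
    Real.rpow_mul (abs_nonneg t), Real.rpow_two]

lemma meas_norm_lt_le (hB : IsFBM P d α B) (hα : 0 < α) {t : ℝ} (ht : t ≠ 0) {r : ℝ}
    (hr : 0 < r) : P {ω | ‖B t ω‖ < r} ≤ ENNReal.ofReal ((r / |t| ^ α) ^ d) := by
  have hcov (i j : Fin d) (hij : i ≠ j) : cov[fun ω ↦ B t ω i, fun ω ↦ B t ω j; P] = 0 := by
    rw [hB.covariance_eval, if_neg hij]
  have hvar (i : Fin d) : 0 < Var[fun ω ↦ B t ω i; P] := by
    rw [hB.variance_eval hα]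
    positivity
  refine (meas_norm_lt_le_of_hasGaussianLaw (hB.hasGaussianLaw t) hcov hvar hr).trans_eq ?_
  have hsd (i : Fin d) : √Var[fun ω ↦ B t ω i; P] = |t| ^ α := by
    rw [hB.variance_eval hα, Real.sqrt_sq (by positivity)]
  simp only [hsd, Finset.prod_const, Finset.card_univ, Fintype.card_fin]
  rw [ENNReal.ofReal_pow (by positivity)]

variable {H γ t : ℝ}

lemma lintegral_max_norm_rpow_neg_le_of_lt (hB : IsFBM P d α B) (hα : 0 < α) (hH : 0 < H)
    (hγ : 0 < γ) (hγd : γ < H * d) (ht : 0 < t) :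
    ∫⁻ ω, ENNReal.ofReal (max (t ^ H) ‖B t ω‖ ^ (-(γ / H))) ∂P ≤
      ENNReal.ofReal (H * d / (H * d - γ) * t ^ (-(γ * α / H))) := by
  have := (hB.hasGaussianLaw t).isProbabilityMeasure
  have hball (r : ℝ) (hr : 0 < r) :
      P {ω | ‖B t ω‖ < r} ≤ ENNReal.ofReal ((r / t ^ α) ^ (d : ℝ)) := by
    simpa only [abs_of_pos ht, Real.rpow_natCast] using hB.meas_norm_lt_le hα ht.ne' hr
  refine (lintegral_max_rpow_neg_le_of_lt (hB.meas t).norm.aemeasurable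
    (Real.rpow_pos_of_pos ht H) (Real.rpow_pos_of_pos ht α) (div_pos hγ hH)
    ((div_lt_iff₀' hH).2 hγd) hball).trans_eq ?_
  rw [← Real.rpow_mul ht.le]
  congr 2
  · field_simp
  · ring_nf

lemma lintegral_max_norm_rpow_neg_le_of_gt (hB : IsFBM P d α B) (hα : 0 < α) (hH : 0 < H)
    (hγd : H * d < γ) (ht : 0 < t) :
    ∫⁻ ω, ENNReal.ofReal (max (t ^ H) ‖B t ω‖ ^ (-(γ / H))) ∂P ≤
      ENNReal.ofReal (γ / (γ - H * d) * t ^ (d * (H - α) - γ)) := by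
  have := (hB.hasGaussianLaw t).isProbabilityMeasure
  have hγ : 0 < γ := lt_of_le_of_lt (by positivity) hγd
  have hball (r : ℝ) (hr : 0 < r) :
      P {ω | ‖B t ω‖ < r} ≤ ENNReal.ofReal ((r / t ^ α) ^ (d : ℝ)) := by
    simpa only [abs_of_pos ht, Real.rpow_natCast] using hB.meas_norm_lt_le hα ht.ne' hr
  refine (lintegral_max_rpow_neg_le_of_gt (hB.meas t).norm.aemeasurable
    (Real.rpow_pos_of_pos ht H) (Real.rpow_pos_of_pos ht α) (div_pos hγ hH)
    ((lt_div_iff₀' hH).2 hγd) hball).trans_eq ?_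
  rw [← Real.rpow_mul ht.le, ← Real.rpow_mul ht.le, ← Real.rpow_add ht]
  congr 2
  · field_simp
  · congr 1
    field_simp
    ring

end IsFBM

theorem fbm_kernel_estimate_general {Ω : Type*} [MeasurableSpace Ω] (P : Measure Ω)
    (d : ℕ) (α H γ : ℝ) (hα : 0 < α) (hH : 0 < H) (hγ : 0 < γ)
    (B : ℝ → Ω → Fin d → ℝ) (hB : IsFBM P d α B) :
    ∃ C : ℝ, 0 < C ∧ ∀ t : ℝ, 0 < t →
      (γ < H * d →
        ∫⁻ ω, ENNReal.ofReal ((max (t ^ H) ‖B t ω‖) ^ (-(γ / H))) ∂P ≤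
          ENNReal.ofReal (C * t ^ (-(γ * α / H)))) ∧
      (H * d < γ →
        ∫⁻ ω, ENNReal.ofReal ((max (t ^ H) ‖B t ω‖) ^ (-(γ / H))) ∂P ≤
          ENNReal.ofReal (C * t ^ (d * (H - α) - γ))) := by
  rcases lt_trichotomy γ (H * d) with hlt | heq | hgt
  · exact ⟨H * d / (H * d - γ), div_pos (hγ.trans hlt) (sub_pos.2 hlt), fun t ht ↦
      ⟨fun _ ↦ hB.lintegral_max_norm_rpow_neg_le_of_lt hα hH hγ hlt ht,
        fun h ↦ absurd h hlt.not_gt⟩⟩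
  · exact ⟨1, one_pos, fun t _ ↦ ⟨fun h ↦ absurd heq h.ne, fun h ↦ absurd heq h.ne'⟩⟩
  · exact ⟨γ / (γ - H * d), div_pos hγ (sub_pos.2 hgt), fun t ht ↦
      ⟨fun h ↦ absurd h hgt.not_gt,
        fun _ ↦ hB.lintegral_max_norm_rpow_neg_le_of_gt hα hH hgt ht⟩⟩

/-- Estimate for `E[(max(t^H, ‖B^α(t)‖_∞))^{-γ/H}]`, `t ∈ (0,1]`: there is a constant
`C > 0` (depending only on `d`, `H`, `α`, `γ`) such that the expectation is at most
`C t^{-γα/H}` when `γ < Hd`, and at most `C t^{d(H-α)-γ}` when `γ > Hd`.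
(The norm on `Fin d → ℝ` is the maximum norm.) -/
theorem fbm_kernel_estimate {Ω : Type*} [MeasurableSpace Ω] (P : Measure Ω)
    [IsProbabilityMeasure P] (d : ℕ) (α H γ : ℝ)
    (hα : 0 < α) (hαH : α ≤ H) (hH : H < 1) (hγ : 0 < γ)
    (B : ℝ → Ω → Fin d → ℝ) (hB : IsFBM P d α B) :
    ∃ C : ℝ, 0 < C ∧ ∀ t ∈ Set.Ioc (0:ℝ) 1,
      (γ < H * d →
        ∫⁻ ω, ENNReal.ofReal ((max (t ^ H) ‖B t ω‖) ^ (-(γ / H))) ∂P ≤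
          ENNReal.ofReal (C * t ^ (-(γ * α / H)))) ∧
      (H * d < γ →
        ∫⁻ ω, ENNReal.ofReal ((max (t ^ H) ‖B t ω‖) ^ (-(γ / H))) ∂P ≤
          ENNReal.ofReal (C * t ^ (d * (H - α) - γ))) := by
  obtain ⟨C, hC, hbound⟩ :=
    fbm_kernel_estimate_general P d α H γ hα (hα.trans_le hαH) hγ B hB
  exact ⟨C, hC, fun t ht ↦ hbound t ht.1⟩
end
end

section
/- Let 0 < α' ≤ H < 1, let B₀ᴴ and B₀^{α'} be independent real-valued fractional Brownian motions of Hurst indices H and α' respectively (defined on a product probability space), and set Z₀(t) = B₀ᴴ(t) + B₀^{α'}(t). Let I ⊂ (0,1] be a closed interval. Then there exists a constant C > 0 depending only on α', H and I such that for all integers n ≥ 1, all u, t₁, …, t_n ∈ I, and with t₀ = 0: Var(Z₀(u) | Z₀(t₁), …, Z₀(t_n)) ≥ C [ min_{0≤k≤n} |u − t_k|^{2α'} + min_{0≤k≤n} |u − t_k|^{2H} ]. -/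
open MeasureTheory ENNReal Set

noncomputable section

/-- `B` is a real-valued fractional Brownian motion of Hurst index `H` under `P`:
a centered Gaussian process (every finite linear combination of values of the process is a
centered Gaussian random variable) with covariance
`E[B(s)B(t)] = ½(|s|^{2H} + |t|^{2H} − |s−t|^{2H})`. -/
structure IsFBMReal {Ω : Type*} [MeasurableSpace Ω] (P : Measure Ω) (H : ℝ)
    (B : ℝ → Ω → ℝ) : Prop where
  meas : ∀ t, Measurable (B t)
  gaussian : ∀ (n : ℕ) (t a : Fin n → ℝ),
    ∃ v : NNReal, P.map (fun ω => ∑ j, a j * B (t j) ω) =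
      ProbabilityTheory.gaussianReal 0 v
  cov : ∀ s t : ℝ, ∫ ω, B s ω * B t ω ∂P =
    (|s| ^ (2*H) + |t| ^ (2*H) - |s - t| ^ (2*H)) / 2

/-!
For a Lipschitz profile `h` supported in `[-1, 1]`, the translates `h (· - x) - h` form a path in
`L²(ℝ)` issued from `0` with stationary increments, whose second moments `G x = ‖h (· - x) - h‖²`
are `O(x²)` and bounded. Hence `∫₀^∞ l ^ (-2 H - 1) * G (x * l) dl = K * |x| ^ (2 * H)` for
`0 < H < 1`: fractional Brownian motion is a mixture over the scales `l` of dilated translation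
paths. At scales `l ≥ 2 / r` points at distance at least `r` correspond to translates of `h` with
disjoint supports, so they contribute orthogonally; integrating over these scales bounds the
prediction error at a point at distance `r` from the data and from `0` below by a multiple of
`r ^ (2 * H)`. The prediction error of a sum of independent motions is the sum of the two
prediction errors with the same coefficients.
-/

/-! ### Quadratic forms of variograms -/

section Variogram

variable {ι Ω : Type*} [Fintype ι] [MeasurableSpace Ω] {μ : Measure Ω}

/-- The covariance of a centred process with stationary increments that vanishes at `0`, where
`γ x` is the second moment of its increments over a span `x`. -/
def variogramCov (γ : ℝ → ℝ) (s t : ℝ) : ℝ :=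
  (γ s + γ t - γ (s - t)) / 2

/-- The quadratic form of `variogramCov γ`: the second moment of `∑ i, b i * X (x i)` for a process
`X` with that covariance. -/
def variogramForm (γ : ℝ → ℝ) (b x : ι → ℝ) : ℝ :=
  ∑ i, ∑ j, b i * b j * variogramCov γ (x i) (x j)

lemma variogramForm_add (γ δ : ℝ → ℝ) (b x : ι → ℝ) :
    variogramForm (fun y => γ y + δ y) b x = variogramForm γ b x + variogramForm δ b x := by
  simp only [variogramForm, variogramCov, ← Finset.sum_add_distrib]
  exact Finset.sum_congr rfl fun i _ => Finset.sum_congr rfl fun j _ => by ring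

lemma variogramForm_const_mul (c : ℝ) (γ : ℝ → ℝ) (b x : ι → ℝ) :
    variogramForm (fun y => c * γ y) b x = c * variogramForm γ b x := by
  simp only [variogramForm, variogramCov, Finset.mul_sum]
  exact Finset.sum_congr rfl fun i _ => Finset.sum_congr rfl fun j _ => by ring

lemma variogramForm_comp_mul_right (l : ℝ) (γ : ℝ → ℝ) (b x : ι → ℝ) :
    variogramForm (fun y => γ (y * l)) b x = variogramForm γ b (fun i => x i * l) := by
  simp only [variogramForm, variogramCov, sub_mul]

lemma integrable_variogramCov {γ : Ω → ℝ → ℝ} (hγ : ∀ y, Integrable (γ · y) μ) (s t : ℝ) :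
    Integrable (fun l => variogramCov (γ l) s t) μ :=
  (((hγ s).add (hγ t)).sub (hγ (s - t))).div_const 2

lemma integral_variogramCov {γ : Ω → ℝ → ℝ} (hγ : ∀ y, Integrable (γ · y) μ) (s t : ℝ) :
    ∫ l, variogramCov (γ l) s t ∂μ = variogramCov (fun y => ∫ l, γ l y ∂μ) s t := by
  have hsum : Integrable (fun l => γ l s + γ l t) μ := (hγ s).add (hγ t)
  simp only [variogramCov]
  rw [integral_div, integral_sub hsum (hγ (s - t)), integral_add (hγ s) (hγ t)]

lemma integrable_variogramForm {γ : Ω → ℝ → ℝ} (hγ : ∀ y, Integrable (γ · y) μ) (b x : ι → ℝ) :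
    Integrable (fun l => variogramForm (γ l) b x) μ :=
  integrable_finsetSum _ fun _ _ => integrable_finsetSum _ fun _ _ =>
    (integrable_variogramCov hγ _ _).const_mul _

lemma integral_variogramForm {γ : Ω → ℝ → ℝ} (hγ : ∀ y, Integrable (γ · y) μ) (b x : ι → ℝ) :
    ∫ l, variogramForm (γ l) b x ∂μ = variogramForm (fun y => ∫ l, γ l y ∂μ) b x := by
  have hint i j : Integrable (fun l => b i * b j * variogramCov (γ l) (x i) (x j)) μ :=
    (integrable_variogramCov hγ _ _).const_mul _
  simp only [variogramForm]
  rw [integral_finsetSum _ fun i _ => integrable_finsetSum _ fun j _ => hint i j]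
  refine Finset.sum_congr rfl fun i _ => ?_
  rw [integral_finsetSum _ fun j _ => hint i j]
  exact Finset.sum_congr rfl fun j _ => by rw [integral_const_mul, integral_variogramCov hγ]

lemma integrable_sq_sum_mul {f : ι → Ω → ℝ} (hf : ∀ i, MemLp (f i) 2 μ) (b : ι → ℝ) :
    Integrable (fun ω => (∑ i, b i * f i ω) ^ 2) μ :=
  (memLp_finsetSum _ fun i _ => (hf i).const_mul (b i)).integrable_sq

lemma integral_sq_sum_mul {f : ι → Ω → ℝ} (hf : ∀ i, MemLp (f i) 2 μ) (b : ι → ℝ) :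
    ∫ ω, (∑ i, b i * f i ω) ^ 2 ∂μ = ∑ i, ∑ j, b i * b j * ∫ ω, f i ω * f j ω ∂μ := by
  have hint i j : Integrable (fun ω => b i * f i ω * (b j * f j ω)) μ :=
    ((hf i).const_mul _).integrable_mul ((hf j).const_mul _)
  simp_rw [sq, Finset.sum_mul_sum]
  rw [integral_finsetSum _ fun i _ => integrable_finsetSum _ fun j _ => hint i j]
  refine Finset.sum_congr rfl fun i _ => ?_
  rw [integral_finsetSum _ fun j _ => hint i j]
  refine Finset.sum_congr rfl fun j _ => ?_
  rw [← integral_const_mul]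
  congr with ω
  ring

lemma integral_sq_sum_mul_eq_variogramForm {X : ℝ → Ω → ℝ} {γ : ℝ → ℝ}
    (hX : ∀ t, MemLp (X t) 2 μ) (hcov : ∀ s t, ∫ ω, X s ω * X t ω ∂μ = variogramCov γ s t)
    (b x : ι → ℝ) :
    ∫ ω, (∑ i, b i * X (x i) ω) ^ 2 ∂μ = variogramForm γ b x := by
  simp only [integral_sq_sum_mul fun i => hX (x i), hcov, variogramForm]

/-- The form of the prediction error of a process at `u` from its values at the points `t j`, with
coefficients `a j`. The index `none` stands for the predicted point. -/
def predictionForm (γ : ℝ → ℝ) (u : ℝ) (t a : ι → ℝ) : ℝ :=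
  variogramForm γ (fun k : Option ι => k.elim 1 fun j => -a j) (fun k => k.elim u t)

lemma integral_sq_sub_sum_mul_eq_predictionForm {X : ℝ → Ω → ℝ} {γ : ℝ → ℝ}
    (hX : ∀ t, MemLp (X t) 2 μ) (hcov : ∀ s t, ∫ ω, X s ω * X t ω ∂μ = variogramCov γ s t)
    (u : ℝ) (t a : ι → ℝ) :
    ∫ ω, (X u ω - ∑ j, a j * X (t j) ω) ^ 2 ∂μ = predictionForm γ u t a := by
  rw [predictionForm, ← integral_sq_sum_mul_eq_variogramForm hX hcov]
  simp [Fintype.sum_option, sub_eq_add_neg]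

end Variogram

/-! ### Translation energy of a profile -/

section TranslationEnergy

variable {h : ℝ → ℝ}

/-- The squared `L²` distance between `h` and its translate by `x`. It is the variogram of the path
`x ↦ h (· - x) - h` in `L²(ℝ)`. -/
def translationEnergy (h : ℝ → ℝ) (x : ℝ) : ℝ :=
  ∫ z, (h (z - x) - h z) ^ 2

lemma translationEnergy_zero (h : ℝ → ℝ) : translationEnergy h 0 = 0 := by
  simp [translationEnergy]

lemma translationEnergy_nonneg (h : ℝ → ℝ) (x : ℝ) : 0 ≤ translationEnergy h x :=
  integral_nonneg fun _ => sq_nonneg _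

lemma integral_sq_translate_sub_translate (h : ℝ → ℝ) (x y : ℝ) :
    ∫ z, (h (z - x) - h (z - y)) ^ 2 = translationEnergy h (x - y) := by
  rw [translationEnergy, ← integral_sub_right_eq_self (fun z => (h (z - (x - y)) - h z) ^ 2) y]
  simp only [sub_sub, add_sub_cancel]

lemma translationEnergy_neg (h : ℝ → ℝ) (x : ℝ) :
    translationEnergy h (-x) = translationEnergy h x := by
  rw [← zero_sub, ← integral_sq_translate_sub_translate]
  simp only [sub_zero, translationEnergy, sub_sq_comm]

lemma measurable_translationEnergy (hh : Measurable h) : Measurable (translationEnergy h) := by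
  refine (StronglyMeasurable.integral_prod_right
    (f := fun x z => (h (z - x) - h z) ^ 2) (Measurable.stronglyMeasurable ?_)).measurable
  unfold Function.uncurry
  fun_prop

lemma memLp_translate {p : ℝ≥0∞} (hh : MemLp h p) (x : ℝ) : MemLp (fun z => h (z - x)) p :=
  hh.comp_measurePreserving (measurePreserving_sub_right volume x)

lemma memLp_translate_sub {p : ℝ≥0∞} (hh : MemLp h p) (x : ℝ) :
    MemLp (fun z => h (z - x) - h z) p :=
  (memLp_translate hh x).sub hh

lemma translationEnergy_le_four_mul (hh : MemLp h 2) (x : ℝ) :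
    translationEnergy h x ≤ 4 * ∫ z, h z ^ 2 := by
  have hx := (memLp_translate hh x).integrable_sq
  calc translationEnergy h x ≤ ∫ z, (2 * h (z - x) ^ 2 + 2 * h z ^ 2) := by
        refine integral_mono (memLp_translate_sub hh x).integrable_sq
          ((hx.const_mul 2).add (hh.integrable_sq.const_mul 2)) fun z => ?_
        change (h (z - x) - h z) ^ 2 ≤ 2 * h (z - x) ^ 2 + 2 * h z ^ 2
        linarith [sq_nonneg (h (z - x) + h z)]
    _ = 4 * ∫ z, h z ^ 2 := by
        rw [integral_add (hx.const_mul 2) (hh.integrable_sq.const_mul 2), integral_const_mul,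
          integral_const_mul, integral_sub_right_eq_self (fun z => h z ^ 2) x]
        ring

lemma integral_translate_sub_mul_translate_sub (hh : MemLp h 2) (x y : ℝ) :
    ∫ z, (h (z - x) - h z) * (h (z - y) - h z) = variogramCov (translationEnergy h) x y := by
  have hx := (memLp_translate_sub hh x).integrable_sq
  have hy := (memLp_translate_sub hh y).integrable_sq
  have hsum : Integrable fun z => (h (z - x) - h z) ^ 2 + (h (z - y) - h z) ^ 2 := hx.add hy
  have hxy : Integrable fun z => (h (z - x) - h (z - y)) ^ 2 :=
    ((memLp_translate hh x).sub (memLp_translate hh y)).integrable_sq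
  rw [variogramCov, ← integral_sq_translate_sub_translate]
  simp only [translationEnergy]
  rw [← integral_add hx hy, ← integral_sub hsum hxy, ← integral_div]
  congr with z
  ring

lemma variogramForm_translationEnergy {ι : Type*} [Fintype ι] (hh : MemLp h 2) (b x : ι → ℝ) :
    variogramForm (translationEnergy h) b x = ∫ z, (∑ i, b i * (h (z - x i) - h z)) ^ 2 :=
  (integral_sq_sum_mul_eq_variogramForm (memLp_translate_sub hh)
    (integral_translate_sub_mul_translate_sub hh) b x).symm

lemma variogramForm_translationEnergy_nonneg {ι : Type*} [Fintype ι] (hh : MemLp h 2)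
    (b x : ι → ℝ) : 0 ≤ variogramForm (translationEnergy h) b x := by
  rw [variogramForm_translationEnergy hh]
  exact integral_nonneg fun _ => sq_nonneg _

lemma sq_mul_integral_sq_le_variogramForm {ι : Type*} [Fintype ι] (hh : MemLp h 2)
    (hsupp : ∀ z, 1 ≤ |z| → h z = 0) (b x : ι → ℝ) (i₀ : ι) (h_zero : 2 ≤ |x i₀|)
    (h_sep : ∀ i, i ≠ i₀ → 2 ≤ |x i₀ - x i|) :
    b i₀ ^ 2 * ∫ z, h z ^ 2 ≤ variogramForm (translationEnergy h) b x := by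
  rw [variogramForm_translationEnergy hh, ← integral_sub_right_eq_self (fun z => h z ^ 2) (x i₀),
    ← integral_const_mul]
  refine integral_mono ((memLp_translate hh _).integrable_sq.const_mul _)
    (integrable_sq_sum_mul (fun i => memLp_translate_sub hh (x i)) b) fun z => ?_
  change b i₀ ^ 2 * h (z - x i₀) ^ 2 ≤ (∑ i, b i * (h (z - x i) - h z)) ^ 2
  rcases le_or_gt 1 |z - x i₀| with hz | hz
  · simpa [hsupp _ hz] using sq_nonneg (∑ i, b i * (h (z - x i) - h z))
  have eq_zero_of_far (y : ℝ) (hy : 2 ≤ |x i₀ - y|) : h (z - y) = 0 := by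
    refine hsupp _ ?_
    have := abs_sub_le (x i₀) z y
    rw [abs_sub_comm (x i₀) z] at this
    linarith
  have hz₀ : h z = 0 := by simpa using eq_zero_of_far 0 (by simpa using h_zero)
  have hsum : ∑ i, b i * (h (z - x i) - h z) = b i₀ * h (z - x i₀) := by
    rw [Finset.sum_eq_single_of_mem i₀ (Finset.mem_univ _), hz₀, sub_zero]
    intro i _ hi
    rw [eq_zero_of_far _ (h_sep i hi), hz₀, sub_zero, mul_zero]
  rw [hsum, mul_pow]

variable {L : NNReal}

lemma memLp_of_lipschitzWith_of_support (hL : LipschitzWith L h)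
    (hsupp : ∀ z, 1 ≤ |z| → h z = 0) (p : ℝ≥0∞) : MemLp h p := by
  refine hL.continuous.memLp_of_hasCompactSupport
    (HasCompactSupport.intro (isCompact_closedBall 0 1) fun z hz => hsupp z ?_)
  simpa using (not_le.1 (mt mem_closedBall_zero_iff.2 hz)).le

lemma translationEnergy_le_mul_sq (hL : LipschitzWith L h) (hsupp : ∀ z, 1 ≤ |z| → h z = 0)
    (x : ℝ) : translationEnergy h x ≤ 4 * L ^ 2 * x ^ 2 := by
  set s := Metric.closedBall x 1 ∪ Metric.closedBall 0 1
  have hs : volume.real s ≤ 4 := by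
    have := measureReal_union_le (μ := volume) (Metric.closedBall x 1) (Metric.closedBall 0 1)
    rw [Real.volume_real_closedBall zero_le_one, Real.volume_real_closedBall zero_le_one] at this
    linarith
  have hs_top : volume s < ∞ :=
    measure_union_lt_top measure_closedBall_lt_top measure_closedBall_lt_top
  have hbound (z : ℝ) : ‖(h (z - x) - h z) ^ 2‖ ≤ L ^ 2 * x ^ 2 := by
    have := hL.dist_le_mul (z - x) z
    rw [Real.dist_eq, Real.dist_eq, sub_sub_cancel_left, abs_neg] at this
    rw [norm_pow, Real.norm_eq_abs, ← sq_abs x, ← mul_pow]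
    exact pow_le_pow_left₀ (abs_nonneg _) this 2
  have houtside (z : ℝ) (hz : z ∉ s) : (h (z - x) - h z) ^ 2 = 0 := by
    simp only [s, mem_union, Metric.mem_closedBall, Real.dist_eq, not_or, not_le, sub_zero] at hz
    simp [hsupp _ hz.1.le, hsupp _ hz.2.le]
  calc translationEnergy h x = ∫ z in s, (h (z - x) - h z) ^ 2 :=
        (setIntegral_eq_integral_of_forall_compl_eq_zero houtside).symm
    _ ≤ L ^ 2 * x ^ 2 * volume.real s :=
        (Real.le_norm_self _).trans
          (norm_setIntegral_le_of_norm_le_const hs_top fun z _ => hbound z)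
    _ ≤ 4 * L ^ 2 * x ^ 2 := by
        linarith [mul_le_mul_of_nonneg_left hs (by positivity : 0 ≤ (L : ℝ) ^ 2 * x ^ 2)]

end TranslationEnergy

/-! ### Fractional Brownian motion as a mixture of scales -/

section ScaleMixture

variable {ι : Type*} [Fintype ι] {h : ℝ → ℝ} {L : NNReal} {H : ℝ}

/-- The second moment of the increments of fractional Brownian motion of Hurst index `H`. -/
def fbmVariogram (H x : ℝ) : ℝ :=
  |x| ^ (2 * H)

/-- The constant `K` in `∫₀^∞ l ^ (-2 H - 1) * G (x * l) dl = K * |x| ^ (2 * H)`, where `G` is the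
translation energy of `h`. -/
def energyMoment (h : ℝ → ℝ) (H : ℝ) : ℝ :=
  ∫ l in Ioi (0 : ℝ), l ^ (-(2 * H) - 1) * translationEnergy h l

lemma integral_rpow_mul_comp_mul {g : ℝ → ℝ} (hg_even : ∀ y, g (-y) = g y) (hg_zero : g 0 = 0)
    {s : ℝ} (hs : s ≠ 0) (x : ℝ) :
    ∫ l in Ioi (0 : ℝ), l ^ (-s - 1) * g (x * l) =
      |x| ^ s * ∫ l in Ioi (0 : ℝ), l ^ (-s - 1) * g l := by
  rcases eq_or_ne x 0 with rfl | hx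
  · simp [hg_zero, Real.zero_rpow hs]
  have hx' : 0 < |x| := abs_pos.2 hx
  have hg_abs (l : ℝ) : g (|x| * l) = g (x * l) := by
    rcases abs_choice x with h | h <;> simp [h, hg_even]
  have hpow : |x| ^ (s + 1) * |x| ^ (-s - 1) = 1 := by
    rw [← Real.rpow_add hx', ← neg_add', add_neg_cancel, Real.rpow_zero]
  calc ∫ l in Ioi (0 : ℝ), l ^ (-s - 1) * g (x * l)
      = ∫ l in Ioi (0 : ℝ), |x| ^ (s + 1) * ((|x| * l) ^ (-s - 1) * g (|x| * l)) := by
        refine setIntegral_congr_fun measurableSet_Ioi fun l hl => ?_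
        simp only [hg_abs, Real.mul_rpow hx'.le (le_of_lt hl)]
        linear_combination (-(l ^ (-s - 1) * g (x * l))) * hpow
    _ = |x| ^ (s + 1) * (|x|⁻¹ * ∫ l in Ioi (0 : ℝ), l ^ (-s - 1) * g l) := by
        rw [integral_const_mul, integral_comp_mul_left_Ioi (fun l => l ^ (-s - 1) * g l) 0 hx',
          mul_zero, smul_eq_mul]
    _ = |x| ^ s * ∫ l in Ioi (0 : ℝ), l ^ (-s - 1) * g l := by
        rw [Real.rpow_add_one hx'.ne']
        field_simp

lemma integral_rpow_mul_translationEnergy (h : ℝ → ℝ) (hH : 0 < H) (x : ℝ) :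
    ∫ l in Ioi (0 : ℝ), l ^ (-(2 * H) - 1) * translationEnergy h (x * l) =
      energyMoment h H * fbmVariogram H x := by
  rw [integral_rpow_mul_comp_mul (translationEnergy_neg h) (translationEnergy_zero h)
    (by positivity), fbmVariogram, energyMoment, mul_comm]

lemma integrableOn_rpow_mul_translationEnergy (hL : LipschitzWith L h)
    (hsupp : ∀ z, 1 ≤ |z| → h z = 0) (hH : H ∈ Ioo 0 1) (x : ℝ) :
    IntegrableOn (fun l => l ^ (-(2 * H) - 1) * translationEnergy h (x * l)) (Ioi 0) := by
  have hbdd (l : ℝ) : ‖translationEnergy h (x * l)‖ ≤ 4 * ∫ z, h z ^ 2 := by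
    rw [Real.norm_of_nonneg (translationEnergy_nonneg h _)]
    exact translationEnergy_le_four_mul (memLp_of_lipschitzWith_of_support hL hsupp 2) _
  have hloc : LocallyIntegrable fun l => translationEnergy h (x * l) := by
    refine (locallyIntegrable_const (4 * ∫ z, h z ^ 2)).mono ?_
      (ae_of_all _ fun l => (hbdd l).trans (Real.le_norm_self _))
    exact ((measurable_translationEnergy hL.continuous.measurable).comp
      (measurable_const_mul x)).aestronglyMeasurable
  refine mellin_convergent_of_isBigO_scalar (a := 0) (b := -2) (hloc.locallyIntegrableOn _)
    (.of_bound (4 * ∫ z, h z ^ 2) (.of_forall fun l => by simpa using hbdd l))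
    (by linarith [hH.1]) (.of_bound (4 * L ^ 2 * x ^ 2) (.of_forall fun l => ?_))
    (by linarith [hH.2])
  rw [Real.norm_of_nonneg (translationEnergy_nonneg h _), neg_neg, Real.rpow_two, norm_pow,
    Real.norm_eq_abs, sq_abs, mul_assoc, ← mul_pow]
  exact translationEnergy_le_mul_sq hL hsupp _

lemma rpow_mul_variogramForm_translationEnergy (h : ℝ → ℝ) (H l : ℝ) (b x : ι → ℝ) :
    l ^ (-(2 * H) - 1) * variogramForm (translationEnergy h) b (fun i => x i * l) =
      variogramForm (fun y => l ^ (-(2 * H) - 1) * translationEnergy h (y * l)) b x := by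
  rw [variogramForm_const_mul, variogramForm_comp_mul_right]

lemma integrableOn_rpow_mul_variogramForm (hL : LipschitzWith L h)
    (hsupp : ∀ z, 1 ≤ |z| → h z = 0) (hH : H ∈ Ioo 0 1) (b x : ι → ℝ) :
    IntegrableOn (fun l => l ^ (-(2 * H) - 1) *
      variogramForm (translationEnergy h) b (fun i => x i * l)) (Ioi 0) := by
  simp only [rpow_mul_variogramForm_translationEnergy]
  exact integrable_variogramForm (integrableOn_rpow_mul_translationEnergy hL hsupp hH) b x

lemma integral_rpow_mul_variogramForm (hL : LipschitzWith L h)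
    (hsupp : ∀ z, 1 ≤ |z| → h z = 0) (hH : H ∈ Ioo 0 1) (b x : ι → ℝ) :
    ∫ l in Ioi (0 : ℝ), l ^ (-(2 * H) - 1) *
        variogramForm (translationEnergy h) b (fun i => x i * l) =
      energyMoment h H * variogramForm (fbmVariogram H) b x := by
  simp only [rpow_mul_variogramForm_translationEnergy]
  simp only [← variogramForm_const_mul, ← integral_rpow_mul_translationEnergy h hH.1]
  exact integral_variogramForm (integrableOn_rpow_mul_translationEnergy hL hsupp hH) b x

lemma sq_mul_rpow_le_energyMoment_mul_variogramForm (hL : LipschitzWith L h)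
    (hsupp : ∀ z, 1 ≤ |z| → h z = 0) (hH : H ∈ Ioo 0 1) (b x : ι → ℝ) (i₀ : ι) {r : ℝ}
    (hr : 0 < r) (h_zero : r ≤ |x i₀|) (h_sep : ∀ i, i ≠ i₀ → r ≤ |x i₀ - x i|) :
    b i₀ ^ 2 * (∫ z, h z ^ 2) * ((2 / r) ^ (-(2 * H)) / (2 * H)) ≤
      energyMoment h H * variogramForm (fbmVariogram H) b x := by
  have hh := memLp_of_lipschitzWith_of_support hL hsupp 2
  have hint := integrableOn_rpow_mul_variogramForm hL hsupp hH b x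
  have hr' : 0 < 2 / r := by positivity
  have hsubset : Ioi (2 / r) ⊆ Ioi (0 : ℝ) := Ioi_subset_Ioi hr'.le
  have hexp : -(2 * H) - 1 < -1 := by linarith [hH.1]
  have two_le_abs_mul {l y : ℝ} (hl : 2 / r < l) (hy : r ≤ |y|) : 2 ≤ |y * l| := by
    have hl₀ : 0 < l := hr'.trans hl
    rw [abs_mul, abs_of_pos hl₀]
    exact ((div_lt_iff₀' hr).1 hl).le.trans (mul_le_mul_of_nonneg_right hy hl₀.le)
  calc b i₀ ^ 2 * (∫ z, h z ^ 2) * ((2 / r) ^ (-(2 * H)) / (2 * H))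
      = ∫ l in Ioi (2 / r), l ^ (-(2 * H) - 1) * (b i₀ ^ 2 * ∫ z, h z ^ 2) := by
        rw [integral_mul_const, integral_Ioi_rpow_of_lt hexp hr', sub_add_cancel, neg_div_neg_eq,
          mul_comm]
    _ ≤ ∫ l in Ioi (2 / r), l ^ (-(2 * H) - 1) *
          variogramForm (translationEnergy h) b (fun i => x i * l) := by
        refine setIntegral_mono_on ((integrableOn_Ioi_rpow_of_lt hexp hr').mul_const _)
          (hint.mono_set hsubset) measurableSet_Ioi fun l hl => ?_
        refine mul_le_mul_of_nonneg_left ?_ (Real.rpow_nonneg (hr'.trans hl).le _)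
        refine sq_mul_integral_sq_le_variogramForm hh hsupp b _ i₀ (two_le_abs_mul hl h_zero)
          fun i hi => ?_
        rw [← sub_mul]
        exact two_le_abs_mul hl (h_sep i hi)
    _ ≤ ∫ l in Ioi (0 : ℝ), l ^ (-(2 * H) - 1) *
          variogramForm (translationEnergy h) b (fun i => x i * l) := by
        refine setIntegral_mono_set hint ?_ hsubset.eventuallyLE
        filter_upwards [ae_restrict_mem measurableSet_Ioi] with l hl
        exact mul_nonneg (Real.rpow_nonneg (le_of_lt hl) _)
          (variogramForm_translationEnergy_nonneg hh _ _)
    _ = energyMoment h H * variogramForm (fbmVariogram H) b x :=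
        integral_rpow_mul_variogramForm hL hsupp hH b x

lemma energyMoment_pos (hL : LipschitzWith L h) (hsupp : ∀ z, 1 ≤ |z| → h z = 0)
    (hh : 0 < ∫ z, h z ^ 2) (hH : H ∈ Ioo 0 1) : 0 < energyMoment h H := by
  have hH₀ : 0 < H := hH.1
  have hform : variogramForm (fbmVariogram H) (fun _ : Unit => 1) (fun _ => 1) = 1 := by
    simp [variogramForm, variogramCov, fbmVariogram, hH₀.ne']
  have := sq_mul_rpow_le_energyMoment_mul_variogramForm hL hsupp hH (fun _ : Unit => 1)
    (fun _ => 1) () one_pos (by simp) (by simp)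
  rw [hform, mul_one] at this
  exact lt_of_lt_of_le (by positivity) this

/-- The triangular bump with peak `1` at `0` and support `[-1, 1]`. An indicator function would not
do as a profile: its translation energy is of order `|x|` only, which confines `H` to
`(0, 1 / 2)`. -/
def tent (z : ℝ) : ℝ :=
  max 0 (1 - |z|)

lemma lipschitzWith_tent : LipschitzWith 1 tent := by
  have : LipschitzWith 1 fun z : ℝ => 1 - |z| := by
    simpa using (LipschitzWith.const (1 : ℝ)).sub (lipschitzWith_one_norm (E := ℝ))
  exact this.const_max 0

lemma tent_eq_zero_of_one_le_abs (z : ℝ) (hz : 1 ≤ |z|) : tent z = 0 :=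
  max_eq_left (sub_nonpos.2 hz)

lemma memLp_tent (p : ℝ≥0∞) : MemLp tent p :=
  memLp_of_lipschitzWith_of_support lipschitzWith_tent tent_eq_zero_of_one_le_abs p

lemma integral_sq_tent_pos : 0 < ∫ z, tent z ^ 2 := by
  refine integral_pos_of_integrable_nonneg_nonzero (x := 0) (lipschitzWith_tent.continuous.pow 2)
    (memLp_tent 2).integrable_sq (fun z => sq_nonneg _) ?_
  simp [tent]

end ScaleMixture

/-! ### Strong local nondeterminism -/

section Nondeterminism

variable {ι : Type*} {H : ℝ}

/-- `min_{0 ≤ k ≤ n} γ (u - t k)` with `t 0 = 0`. The index `none` stands for `k = 0`. -/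
def variogramGap (γ : ℝ → ℝ) (u : ℝ) (t : ι → ℝ) : ℝ :=
  ⨅ k : Option ι, γ (u - k.elim 0 t)

lemma fbmVariogram_nonneg (H x : ℝ) : 0 ≤ fbmVariogram H x :=
  Real.rpow_nonneg (abs_nonneg x) _

lemma variogramGap_fbmVariogram_nonneg (H u : ℝ) (t : ι → ℝ) :
    0 ≤ variogramGap (fbmVariogram H) u t :=
  Real.iInf_nonneg fun _ => fbmVariogram_nonneg H _

lemma variogramGap_le [Finite ι] (γ : ℝ → ℝ) (u : ℝ) (t : ι → ℝ) (k : Option ι) :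
    variogramGap γ u t ≤ γ (u - k.elim 0 t) :=
  ciInf_le (finite_range _).bddBelow k

lemma min_iInf_rpow_le_variogramGap [Finite ι] (H : ℝ) {u : ℝ} (hu : 0 ≤ u) (t : ι → ℝ) :
    min (u ^ (2 * H)) (⨅ j, |u - t j| ^ (2 * H)) ≤ variogramGap (fbmVariogram H) u t := by
  refine le_ciInf fun k => ?_
  cases k with
  | none => simp [fbmVariogram, abs_of_nonneg hu]
  | some j => exact (min_le_right _ _).trans (ciInf_le (finite_range _).bddBelow j)

/-- The constant in the strong local nondeterminism of fractional Brownian motion that the scale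
mixture over `tent` provides. -/
def nondeterminismConst (H : ℝ) : ℝ :=
  (∫ z, tent z ^ 2) * (2 ^ (-(2 * H)) / (2 * H)) / energyMoment tent H

lemma energyMoment_tent_pos (hH : H ∈ Ioo 0 1) : 0 < energyMoment tent H :=
  energyMoment_pos lipschitzWith_tent tent_eq_zero_of_one_le_abs integral_sq_tent_pos hH

lemma nondeterminismConst_pos (hH : H ∈ Ioo 0 1) : 0 < nondeterminismConst H := by
  have hH₀ : 0 < H := hH.1
  have := integral_sq_tent_pos
  have := energyMoment_tent_pos hH
  unfold nondeterminismConst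
  positivity

variable [Fintype ι]

lemma variogramForm_fbmVariogram_nonneg (hH : H ∈ Ioo 0 1) (b x : ι → ℝ) :
    0 ≤ variogramForm (fbmVariogram H) b x := by
  refine (mul_nonneg_iff_of_pos_left (energyMoment_tent_pos hH)).1 ?_
  rw [← integral_rpow_mul_variogramForm lipschitzWith_tent tent_eq_zero_of_one_le_abs hH]
  exact setIntegral_nonneg measurableSet_Ioi fun l hl =>
    mul_nonneg (Real.rpow_nonneg (le_of_lt hl) _)
      (variogramForm_translationEnergy_nonneg (memLp_tent 2) _ _)

lemma nondeterminismConst_mul_le_variogramForm (hH : H ∈ Ioo 0 1) (b x : ι → ℝ) (i₀ : ι) {r : ℝ}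
    (hr : 0 < r) (h_zero : r ≤ |x i₀|) (h_sep : ∀ i, i ≠ i₀ → r ≤ |x i₀ - x i|) :
    nondeterminismConst H * (b i₀ ^ 2 * r ^ (2 * H)) ≤ variogramForm (fbmVariogram H) b x := by
  have hpow : (2 / r) ^ (-(2 * H)) = 2 ^ (-(2 * H)) * r ^ (2 * H) := by
    rw [Real.div_rpow zero_le_two hr.le, Real.rpow_neg hr.le, div_inv_eq_mul]
  have := sq_mul_rpow_le_energyMoment_mul_variogramForm lipschitzWith_tent
    tent_eq_zero_of_one_le_abs hH b x i₀ hr h_zero h_sep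
  rw [nondeterminismConst, div_mul_eq_mul_div, div_le_iff₀' (energyMoment_tent_pos hH)]
  refine le_of_eq_of_le ?_ this
  rw [hpow]
  ring

lemma nondeterminismConst_mul_variogramGap_le_predictionForm (hH : H ∈ Ioo 0 1) (u : ℝ)
    (t a : ι → ℝ) :
    nondeterminismConst H * variogramGap (fbmVariogram H) u t ≤
      predictionForm (fbmVariogram H) u t a := by
  set g := variogramGap (fbmVariogram H) u t
  have hH' : 0 < 2 * H := mul_pos two_pos hH.1
  have hg : 0 ≤ g := variogramGap_fbmVariogram_nonneg H u t
  rcases hg.eq_or_lt with hg₀ | hg₀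
  · rw [← hg₀, mul_zero]
    exact variogramForm_fbmVariogram_nonneg hH _ _
  have hr_le (k : Option ι) : g ^ (2 * H)⁻¹ ≤ |u - k.elim 0 t| :=
    (Real.rpow_inv_le_iff_of_pos hg (abs_nonneg _) hH').2 (variogramGap_le _ u t k)
  have := nondeterminismConst_mul_le_variogramForm hH (fun k : Option ι => k.elim 1 fun j => -a j)
    (fun k => k.elim u t) none (Real.rpow_pos_of_pos hg₀ _) (by simpa using hr_le none)
    (Option.forall.2 ⟨fun h => (h rfl).elim, fun j _ => hr_le (some j)⟩)
  rw [Real.rpow_inv_rpow hg hH'.ne'] at this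
  simpa [predictionForm] using this

end Nondeterminism

/-! ### Sums of independent fractional Brownian motions -/

section Independent

variable {Ω₁ Ω₂ : Type*} [MeasurableSpace Ω₁] [MeasurableSpace Ω₂] {P₁ : Measure Ω₁}
  {P₂ : Measure Ω₂}

lemma integral_prod_add_mul_add [IsProbabilityMeasure P₁] [IsProbabilityMeasure P₂]
    {f f' : Ω₁ → ℝ} {g g' : Ω₂ → ℝ} (hf : MemLp f 2 P₁) (hf' : MemLp f' 2 P₁)
    (hg : MemLp g 2 P₂) (hg' : MemLp g' 2 P₂) (hf_mean : ∫ ω, f ω ∂P₁ = 0)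
    (hf'_mean : ∫ ω, f' ω ∂P₁ = 0) :
    ∫ ω : Ω₁ × Ω₂, (f ω.1 + g ω.2) * (f' ω.1 + g' ω.2) ∂(P₁.prod P₂) =
      ∫ ω, f ω * f' ω ∂P₁ + ∫ ω, g ω * g' ω ∂P₂ := by
  have hff' : Integrable (fun ω : Ω₁ × Ω₂ => f ω.1 * f' ω.1) (P₁.prod P₂) :=
    (hf.comp_fst P₂).integrable_mul (hf'.comp_fst P₂)
  have hgg' : Integrable (fun ω : Ω₁ × Ω₂ => g ω.2 * g' ω.2) (P₁.prod P₂) :=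
    (hg.comp_snd P₁).integrable_mul (hg'.comp_snd P₁)
  have hfg' : Integrable (fun ω : Ω₁ × Ω₂ => f ω.1 * g' ω.2) (P₁.prod P₂) :=
    (hf.comp_fst P₂).integrable_mul (hg'.comp_snd P₁)
  have hf'g : Integrable (fun ω : Ω₁ × Ω₂ => f' ω.1 * g ω.2) (P₁.prod P₂) :=
    (hf'.comp_fst P₂).integrable_mul (hg.comp_snd P₁)
  have hdiag : Integrable (fun ω : Ω₁ × Ω₂ => f ω.1 * f' ω.1 + g ω.2 * g' ω.2) (P₁.prod P₂) :=
    hff'.add hgg'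
  have hcross : Integrable (fun ω : Ω₁ × Ω₂ => f ω.1 * g' ω.2 + f' ω.1 * g ω.2) (P₁.prod P₂) :=
    hfg'.add hf'g
  calc ∫ ω : Ω₁ × Ω₂, (f ω.1 + g ω.2) * (f' ω.1 + g' ω.2) ∂(P₁.prod P₂)
      = ∫ ω : Ω₁ × Ω₂, (f ω.1 * f' ω.1 + g ω.2 * g' ω.2) +
          (f ω.1 * g' ω.2 + f' ω.1 * g ω.2) ∂(P₁.prod P₂) := by
        congr with ω
        ring
    _ = ∫ ω, f ω * f' ω ∂P₁ + ∫ ω, g ω * g' ω ∂P₂ := by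
        rw [integral_add hdiag hcross, integral_add hff' hgg', integral_add hfg' hf'g,
          integral_fun_fst fun ω => f ω * f' ω, integral_fun_snd fun ω => g ω * g' ω,
          integral_prod_mul, integral_prod_mul, hf_mean, hf'_mean]
        simp

variable {Ω : Type*} [MeasurableSpace Ω] {P : Measure Ω} {H : ℝ} {B : ℝ → Ω → ℝ}

namespace IsFBMReal

lemma exists_map_eq_gaussianReal (hB : IsFBMReal P H B) (t : ℝ) :
    ∃ v : NNReal, P.map (B t) = ProbabilityTheory.gaussianReal 0 v := by
  simpa using hB.gaussian 1 (fun _ => t) (fun _ => 1)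

lemma memLp_two (hB : IsFBMReal P H B) (t : ℝ) : MemLp (B t) 2 P := by
  obtain ⟨v, hv⟩ := hB.exists_map_eq_gaussianReal t
  have hid : MemLp id 2 (P.map (B t)) := hv ▸ ProbabilityTheory.memLp_id_gaussianReal 2
  exact (memLp_map_measure_iff hid.1 (hB.meas t).aemeasurable).1 hid

lemma integral_eq_zero (hB : IsFBMReal P H B) (t : ℝ) : ∫ ω, B t ω ∂P = 0 := by
  obtain ⟨v, hv⟩ := hB.exists_map_eq_gaussianReal t
  calc ∫ ω, B t ω ∂P = ∫ y, y ∂(P.map (B t)) :=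
        (integral_map (hB.meas t).aemeasurable aestronglyMeasurable_id).symm
    _ = 0 := by rw [hv, ProbabilityTheory.integral_id_gaussianReal]

variable {α : ℝ} {B₁ : ℝ → Ω₁ → ℝ} {B₂ : ℝ → Ω₂ → ℝ} [IsProbabilityMeasure P₁]
  [IsProbabilityMeasure P₂]

lemma memLp_two_add_prod (hB₁ : IsFBMReal P₁ H B₁) (hB₂ : IsFBMReal P₂ α B₂) (t : ℝ) :
    MemLp (fun ω : Ω₁ × Ω₂ => B₁ t ω.1 + B₂ t ω.2) 2 (P₁.prod P₂) :=
  ((hB₁.memLp_two t).comp_fst P₂).add ((hB₂.memLp_two t).comp_snd P₁)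

lemma integral_add_prod_mul_add_prod (hB₁ : IsFBMReal P₁ H B₁) (hB₂ : IsFBMReal P₂ α B₂)
    (s t : ℝ) :
    ∫ ω : Ω₁ × Ω₂, (B₁ s ω.1 + B₂ s ω.2) * (B₁ t ω.1 + B₂ t ω.2) ∂(P₁.prod P₂) =
      variogramCov (fun x => fbmVariogram H x + fbmVariogram α x) s t := by
  rw [integral_prod_add_mul_add (hB₁.memLp_two s) (hB₁.memLp_two t) (hB₂.memLp_two s)
    (hB₂.memLp_two t) (hB₁.integral_eq_zero s) (hB₁.integral_eq_zero t), hB₁.cov, hB₂.cov]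
  simp only [variogramCov, fbmVariogram]
  ring

end IsFBMReal

end Independent

theorem slnd_mixed_fbm_general {H α : ℝ} (hH : H ∈ Ioo 0 1) (hα : α ∈ Ioo 0 1) :
    ∃ C : ℝ, 0 < C ∧ ∀ {Ω : Type*} [MeasurableSpace Ω] {μ : Measure Ω} {Z : ℝ → Ω → ℝ},
      (∀ t, MemLp (Z t) 2 μ) →
      (∀ s t, ∫ ω, Z s ω * Z t ω ∂μ =
        variogramCov (fun x => fbmVariogram H x + fbmVariogram α x) s t) →
      ∀ {ι : Type*} [Fintype ι] (u : ℝ) (t : ι → ℝ),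
        C * (variogramGap (fbmVariogram α) u t + variogramGap (fbmVariogram H) u t) ≤
          ⨅ a : ι → ℝ, ∫ ω, (Z u ω - ∑ j, a j * Z (t j) ω) ^ 2 ∂μ := by
  refine ⟨min (nondeterminismConst α) (nondeterminismConst H),
    lt_min (nondeterminismConst_pos hα) (nondeterminismConst_pos hH), ?_⟩
  intro Ω _ μ Z hZ hcov ι _ u t
  refine le_ciInf fun a => ?_
  rw [integral_sq_sub_sum_mul_eq_predictionForm hZ hcov, predictionForm, variogramForm_add,
    mul_add, add_comm]
  gcongr ?_ + ?_
  · exact (mul_le_mul_of_nonneg_right (min_le_right _ _)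
      (variogramGap_fbmVariogram_nonneg H u t)).trans
        (nondeterminismConst_mul_variogramGap_le_predictionForm hH u t a)
  · exact (mul_le_mul_of_nonneg_right (min_le_left _ _)
      (variogramGap_fbmVariogram_nonneg α u t)).trans
        (nondeterminismConst_mul_variogramGap_le_predictionForm hα u t a)

/-- Strong local nondeterminism of `Z₀ = B₀ᴴ + B₀^{α'}` (independent fractional Brownian
motions of Hurst indices `H ≥ α'` on a product probability space): for a closed interval
`I = [c,e] ⊂ (0,1]` there is `C > 0` (depending only on `α'`, `H`, `I`) such that for every
`n ≥ 1`, `u, t₁, …, t_n ∈ I` and `t₀ = 0`,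
`Var(Z₀(u) | Z₀(t₁), …, Z₀(t_n)) ≥ C [min_{0≤k≤n}|u−t_k|^{2α'} + min_{0≤k≤n}|u−t_k|^{2H}]`,
where the conditional variance is the squared `L²`-distance from the linear span, i.e.
`inf` over `a ∈ ℝⁿ` of `E[(Z₀(u) − Σ_j a_j Z₀(t_j))²]` (note `|u − t₀| = u`). -/
theorem slnd_mixed_fbm {Ω₁ Ω₂ : Type*} [MeasurableSpace Ω₁] [MeasurableSpace Ω₂]
    (P₁ : Measure Ω₁) (P₂ : Measure Ω₂)
    [IsProbabilityMeasure P₁] [IsProbabilityMeasure P₂]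
    (H α' : ℝ) (hα' : 0 < α') (hα'H : α' ≤ H) (hH : H < 1)
    (B₁ : ℝ → Ω₁ → ℝ) (B₂ : ℝ → Ω₂ → ℝ)
    (hB₁ : IsFBMReal P₁ H B₁) (hB₂ : IsFBMReal P₂ α' B₂)
    (c e : ℝ) (hc : 0 < c) (hce : c ≤ e) (he : e ≤ 1) :
    ∃ C : ℝ, 0 < C ∧ ∀ n : ℕ, 1 ≤ n → ∀ u ∈ Set.Icc c e, ∀ t : Fin n → ℝ,
      (∀ j, t j ∈ Set.Icc c e) →
      C * (min (u ^ (2 * α')) (⨅ j, |u - t j| ^ (2 * α')) +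
           min (u ^ (2 * H)) (⨅ j, |u - t j| ^ (2 * H))) ≤
        ⨅ a : Fin n → ℝ,
          ∫ ω : Ω₁ × Ω₂,
            ((B₁ u ω.1 + B₂ u ω.2) - ∑ j, a j * (B₁ (t j) ω.1 + B₂ (t j) ω.2)) ^ 2
            ∂(P₁.prod P₂) := by
  obtain ⟨C, hC, hbound⟩ := slnd_mixed_fbm_general (H := H) (α := α')
    ⟨hα'.trans_le hα'H, hH⟩ ⟨hα', hα'H.trans_lt hH⟩
  refine ⟨C, hC, fun n _ u hu t _ => ?_⟩
  have hu₀ : 0 ≤ u := hc.le.trans hu.1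
  exact (mul_le_mul_of_nonneg_left (add_le_add (min_iInf_rpow_le_variogramGap α' hu₀ t)
    (min_iInf_rpow_le_variogramGap H hu₀ t)) hC.le).trans
      (hbound (hB₁.memLp_two_add_prod hB₂) (hB₁.integral_add_prod_mul_add_prod hB₂) u t)
end
end
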